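/- If E is an analytic equivalence relation on ℕ^ℕ all of whose equivalence classes are contained in countable unions of compact sets, then there exists a superperfect set P ⊆ ℕ^ℕ that is a partial E-transversal, i.e. distinct elements of P are E-inequivalent. -/

import Mathlib

/-!
Write `E` as the image of a continuous map `z ↦ (p z, φ z)` on the Baire space. The main point is
that, for generic `x`, the section `{y | E x y}` is eventually dominated by a single sequence `g x`,
with `g` measurable. Call a cylinder bad at `x` if no such `g` exists for the values of `φ` on it,
however small the neighbourhood of `x`. For generic `x`, every cylinder bad at `x` has smaller bad
cylinders on which some coordinate of `φ` takes arbitrarily large constant values: otherwise the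
suprema of these values, together with the bounds for the cylinders that are not bad, would yield a
bound on the cylinder. So if the whole space were bad at `x`, one could escape any sequence of
bounds along a chain of bad cylinders, and the section would not be σ-bounded.

Now `g` is continuous on a comeager set `D`. Build a superperfect set inside `D` by fusion, each
branching value exceeding all the values of `g` decided at earlier stages. Two distinct branches
alternate infinitely often in the order of construction, so `y` is not eventually dominated by `g x`
for distinct points `x` and `y` of the set.
-/

open Set Filter Topology MeasureTheory

section Cylinder

theorem exists_cylinder_subset_of_mem_nhds {E : ℕ → Type*} [∀ n, TopologicalSpace (E n)]
    [∀ n, DiscreteTopology (E n)] {z : ∀ n, E n} {U : Set (∀ n, E n)} (hU : U ∈ 𝓝 z) :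
    ∃ n, PiNat.cylinder z n ⊆ U := by
  obtain ⟨_, ⟨y, n, rfl⟩, hz, hsub⟩ := (PiNat.isTopologicalBasis_cylinders E).mem_nhds_iff.1 hU
  exact ⟨n, PiNat.mem_cylinder_iff_eq.1 hz ▸ hsub⟩

theorem cylinder_mem_nhds {E : ℕ → Type*} [∀ n, TopologicalSpace (E n)]
    [∀ n, DiscreteTopology (E n)] (z : ∀ n, E n) (n : ℕ) : PiNat.cylinder z n ∈ 𝓝 z :=
  (PiNat.isOpen_cylinder E z n).mem_nhds (PiNat.self_mem_cylinder z n)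

theorem diagonal_mem_cylinder {α : Type*} {w : ℕ → ℕ → α} {l : ℕ → ℕ} (hl : StrictMono l)
    (hw : ∀ n, w (n + 1) ∈ PiNat.cylinder (w n) (l n)) (n : ℕ) :
    (fun i => w (i + 1) i) ∈ PiNat.cylinder (w n) (l n) := by
  have hagree {m n : ℕ} (hmn : m ≤ n) : w n ∈ PiNat.cylinder (w m) (l m) := by
    induction n, hmn using Nat.le_induction with
    | base => exact PiNat.self_mem_cylinder _ _
    | succ n hmn ih =>
      exact fun i hi => (hw n i (hi.trans_le (hl.monotone hmn))).trans (ih i hi)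
  intro i hi
  rcases le_total n (i + 1) with h | h
  · exact hagree h i hi
  · exact (hagree h i hl.le_apply).symm

theorem eq_of_forall_mem_closure_image_cylinder {X : Type*} [TopologicalSpace X] [T2Space X]
    {E : ℕ → Type*} [∀ n, TopologicalSpace (E n)] [∀ n, DiscreteTopology (E n)]
    {p : (∀ n, E n) → X} {z : ∀ n, E n} (hp : ContinuousAt p z) {x : X}
    (h : ∀ n, x ∈ closure (p '' PiNat.cylinder z n)) : p z = x := by
  by_contra hne
  obtain ⟨U, V, hU, hV, hzU, hxV, hUV⟩ := t2_separation hne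
  obtain ⟨n, hn⟩ := exists_cylinder_subset_of_mem_nhds (hp.preimage_mem_nhds (hU.mem_nhds hzU))
  obtain ⟨_, hV', z', hz', rfl⟩ := mem_closure_iff.1 (h n) V hV hxV
  exact disjoint_left.1 hUV (hn hz') hV'

/-- The sequences with initial segment `u`, listed backwards as in `PiNat.res`. These are all the
cylinders of `ℕ → α`, indexed by a type that is countable when `α` is. -/
def initialCylinder {α : Type*} (u : List α) : Set (ℕ → α) :=
  {z | PiNat.res z u.length = u}

theorem initialCylinder_nil {α : Type*} : initialCylinder ([] : List α) = univ := by
  simp [initialCylinder]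

theorem initialCylinder_res {α : Type*} (z : ℕ → α) (n : ℕ) :
    initialCylinder (PiNat.res z n) = PiNat.cylinder z n := by
  simp [initialCylinder, PiNat.cylinder_eq_res]

theorem initialCylinder_eq_cylinder {α : Type*} {u : List α} {z : ℕ → α}
    (hz : z ∈ initialCylinder u) : initialCylinder u = PiNat.cylinder z u.length := by
  rw [← initialCylinder_res, show PiNat.res z u.length = u from hz]

end Cylinder

section Domination

theorem exists_measurable_eventuallyLE {X ι : Type*} [MeasurableSpace X] [Countable ι]
    {g : ι → X → ℕ → ℕ} (hg : ∀ i, Measurable (g i)) :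
    ∃ G : X → ℕ → ℕ, Measurable G ∧ ∀ i x, g i x ≤ᶠ[atTop] G x := by
  rcases isEmpty_or_nonempty ι with hι | hι
  · exact ⟨0, measurable_const, fun i => hι.elim i⟩
  obtain ⟨e, he⟩ := exists_surjective_nat ι
  refine ⟨fun x n => ∑ k ∈ Finset.range (n + 1), g (e k) x n, ?_, fun i x => ?_⟩
  · exact measurable_pi_lambda _ fun n =>
      Finset.measurable_sum _ fun k _ => (measurable_pi_apply n).comp (hg (e k))
  · obtain ⟨k, rfl⟩ := he i
    filter_upwards [eventually_ge_atTop k] with n hn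
    exact Finset.single_le_sum (f := fun k => g (e k) x n) (fun _ _ => Nat.zero_le _)
      (Finset.mem_range.2 (Nat.lt_succ_of_le hn))

variable {X : Type*} [TopologicalSpace X] [MeasurableSpace X]

/-- For generic `x ∈ W`, the values of `φ` on the part of the fibre of `p` over `x` lying in `S`
are all eventually dominated by one sequence depending measurably on `x`. -/
def GenericallyBounded (p : (ℕ → ℕ) → X) (φ : (ℕ → ℕ) → ℕ → ℕ) (S : Set (ℕ → ℕ))
    (W : Set X) : Prop :=
  ∃ g : X → ℕ → ℕ, Measurable g ∧
    ∀ᶠ x in residual X, x ∈ W → ∀ z ∈ S, p z = x → φ z ≤ᶠ[atTop] g x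

/-- The largest open set over which `φ` is generically bounded on `S`. -/
def boundedPart (p : (ℕ → ℕ) → X) (φ : (ℕ → ℕ) → ℕ → ℕ) (S : Set (ℕ → ℕ)) : Set X :=
  ⋃₀ {W | IsOpen W ∧ GenericallyBounded p φ S W}

/-- The points `x` such that `φ · k` has constant value `a` on some cylinder that is strictly
smaller than `initialCylinder u` and on which `φ` is not generically bounded near `x`. -/
def persistencePart (p : (ℕ → ℕ) → X) (φ : (ℕ → ℕ) → ℕ → ℕ) (u : List ℕ) (k a : ℕ) : Set X :=
  {x | ∃ v : List ℕ, (u.length < v.length ∧ initialCylinder v ⊆ initialCylinder u ∧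
    ∀ z ∈ initialCylinder v, φ z k = a) ∧ x ∉ boundedPart p φ (initialCylinder v)}

/-- The number `a` over the points at which it is a persistent value of `φ · k`, and `0` elsewhere;
a device for taking suprema of persistent values measurably. -/
noncomputable def persistentValue (p : (ℕ → ℕ) → X) (φ : (ℕ → ℕ) → ℕ → ℕ) (u : List ℕ)
    (k a : ℕ) : X → ℕ :=
  (persistencePart p φ u k a).indicator fun _ => a

/-- The points at which `φ` is not generically bounded on `initialCylinder u`, but has bounded
persistent values at each coordinate. -/
def finitelyBranchingPart (p : (ℕ → ℕ) → X) (φ : (ℕ → ℕ) → ℕ → ℕ) (u : List ℕ) : Set X :=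
  (boundedPart p φ (initialCylinder u))ᶜ ∩
    {x | ∀ k, BddAbove (range fun a => persistentValue p φ u k a x)}

variable {p : (ℕ → ℕ) → X} {φ : (ℕ → ℕ) → ℕ → ℕ} {S : Set (ℕ → ℕ)} {u : List ℕ} {x : X}

theorem isOpen_boundedPart : IsOpen (boundedPart p φ S) :=
  isOpen_sUnion fun _ h => h.1

theorem GenericallyBounded.sUnion {𝒲 : Set (Set X)} (hc : 𝒲.Countable)
    (h : ∀ W ∈ 𝒲, GenericallyBounded p φ S W) : GenericallyBounded p φ S (⋃₀ 𝒲) := by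
  have := hc.to_subtype
  choose g hg hb using fun W : 𝒲 => h W W.2
  obtain ⟨G, hG, hgG⟩ := exists_measurable_eventuallyLE hg
  refine ⟨G, hG, ?_⟩
  filter_upwards [eventually_countable_forall.2 hb] with x hx ⟨W, hW, hxW⟩ z hz hzx
  exact (hx ⟨W, hW⟩ hxW z hz hzx).trans (hgG ⟨W, hW⟩ x)

theorem genericallyBounded_boundedPart [SecondCountableTopology X] :
    GenericallyBounded p φ S (boundedPart p φ S) := by
  obtain ⟨𝒲, h𝒲, hsub, hU⟩ := TopologicalSpace.isOpen_sUnion_countable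
    {W | IsOpen W ∧ GenericallyBounded p φ S W} fun _ h => h.1
  rw [boundedPart, ← hU]
  exact .sUnion h𝒲 fun W hW => (hsub hW).2

theorem mem_closure_image_of_notMem_boundedPart (hx : x ∉ boundedPart p φ S) :
    x ∈ closure (p '' S) := by
  by_contra h
  refine hx ⟨_, ⟨isClosed_closure.isOpen_compl, 0, measurable_const, .of_forall ?_⟩, h⟩
  exact fun y hy z hz hzy => (hy (subset_closure ⟨z, hz, hzy⟩)).elim

theorem measurable_persistentValue [OpensMeasurableSpace X] (u : List ℕ) (k a : ℕ) :
    Measurable (persistentValue p φ u k a) :=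
  measurable_const.indicator <| measurableSet_setOfPred.2 <| .exists fun _ =>
    measurable_const.and (measurableSet_setOfPred.1 isOpen_boundedPart.measurableSet.compl)

theorem measurableSet_finitelyBranchingPart [OpensMeasurableSpace X] (u : List ℕ) :
    MeasurableSet (finitelyBranchingPart p φ u) := by
  refine isOpen_boundedPart.measurableSet.compl.inter ?_
  rw [ofPred_forall]
  exact .iInter fun k => measurableSet_bddAbove_range (measurable_persistentValue u k)

theorem mem_persistencePart_of_forall_notMem_boundedPart (hφ : Continuous φ) {z : ℕ → ℕ}
    (hz : z ∈ initialCylinder u) (hx : ∀ n, x ∉ boundedPart p φ (PiNat.cylinder z n)) (k : ℕ) :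
    x ∈ persistencePart p φ u k (φ z k) := by
  obtain ⟨n, hn⟩ := exists_cylinder_subset_of_mem_nhds
    (hφ.continuousAt.preimage_mem_nhds (cylinder_mem_nhds (φ z) (k + 1)))
  refine ⟨PiNat.res z (max n (u.length + 1)), ⟨?_, ?_, ?_⟩, ?_⟩
  · simp
  · rw [initialCylinder_res, initialCylinder_eq_cylinder hz]
    exact PiNat.cylinder_anti _ (by omega)
  · rw [initialCylinder_res]
    exact fun z' hz' => hn (PiNat.cylinder_anti _ (le_max_left _ _) hz') k k.lt_succ_self
  · rw [initialCylinder_res]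
    exact hx _

theorem genericallyBounded_finitelyBranchingPart [SecondCountableTopology X]
    [OpensMeasurableSpace X] (hφ : Continuous φ) (u : List ℕ) :
    GenericallyBounded p φ (initialCylinder u) (finitelyBranchingPart p φ u) := by
  choose g hg hb using fun v : List ℕ =>
    genericallyBounded_boundedPart (p := p) (φ := φ) (S := initialCylinder v)
  obtain ⟨G, hG, hgG⟩ := exists_measurable_eventuallyLE hg
  refine ⟨fun x k => G x k + ⨆ a, persistentValue p φ u k a x, ?_, ?_⟩
  · exact measurable_pi_lambda _ fun k =>
      ((measurable_pi_apply k).comp hG).add (.iSup (measurable_persistentValue u k))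
  filter_upwards [eventually_countable_forall.2 hb] with x hx ⟨_, hbdd⟩ z hz hzx
  by_cases h : ∃ n, x ∈ boundedPart p φ (PiNat.cylinder z n)
  · obtain ⟨n, hn⟩ := h
    rw [← initialCylinder_res] at hn
    have hzn : z ∈ initialCylinder (PiNat.res z n) := by simp [initialCylinder]
    filter_upwards [(hx _ hn z hzn hzx).trans (hgG _ x)] with k hk using le_add_right hk
  · push Not at h
    refine .of_forall fun k => le_add_left ?_
    have hval : persistentValue p φ u k (φ z k) x = φ z k :=
      indicator_of_mem (mem_persistencePart_of_forall_notMem_boundedPart hφ hz h k) _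
    exact hval.ge.trans (le_ciSup (hbdd k) (φ z k))

theorem isMeagre_finitelyBranchingPart [SecondCountableTopology X] [BorelSpace X]
    (hφ : Continuous φ) (u : List ℕ) : IsMeagre (finitelyBranchingPart p φ u) := by
  obtain ⟨U, hU, hBU⟩ :=
    (measurableSet_finitelyBranchingPart (p := p) (φ := φ) u).residualEq_isOpen
  have hsub : U ⊆ boundedPart p φ (initialCylinder u) := by
    obtain ⟨g, hg, hb⟩ := genericallyBounded_finitelyBranchingPart (p := p) hφ u
    refine subset_sUnion_of_mem ⟨hU, g, hg, ?_⟩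
    filter_upwards [hb, hBU.mem_iff] with x hx hxU hxmem using hx (hxU.2 hxmem)
  filter_upwards [hBU.mem_iff] with x hx hxB using hxB.1 (hsub (hx.1 hxB))

theorem exists_persistent_extension (hu : x ∉ boundedPart p φ (initialCylinder u))
    (hx : x ∉ finitelyBranchingPart p φ u) (b : ℕ → ℕ) :
    ∃ v : List ℕ, x ∉ boundedPart p φ (initialCylinder v) ∧ u.length < v.length ∧
      initialCylinder v ⊆ initialCylinder u ∧ ∃ k, ∀ z ∈ initialCylinder v, b k < φ z k := by
  obtain ⟨k, hk⟩ : ∃ k, ¬ BddAbove (range fun a => persistentValue p φ u k a x) := by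
    by_contra! hbdd
    exact hx ⟨hu, hbdd⟩
  obtain ⟨_, ⟨a, rfl⟩, hba⟩ := not_bddAbove_iff.1 hk (b k)
  have hxa : x ∈ persistencePart p φ u k a :=
    mem_of_indicator_ne_zero (Nat.ne_zero_of_lt hba)
  have hval : persistentValue p φ u k a x = a := indicator_of_mem hxa _
  obtain ⟨v, ⟨hlen, hsub, hva⟩, hv⟩ := hxa
  exact ⟨v, hv, hlen, hsub, k, fun z hz => (hva z hz).symm ▸ hval ▸ hba⟩

theorem exists_fiber_forall_exists_lt [T2Space X] (hp : Continuous p)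
    (hroot : x ∉ boundedPart p φ univ) (hx : ∀ u, x ∉ finitelyBranchingPart p φ u)
    (b : ℕ → ℕ → ℕ) : ∃ z, p z = x ∧ ∀ n, ∃ k, b n k < φ z k := by
  let D := {u : List ℕ // x ∉ boundedPart p φ (initialCylinder u)}
  choose next hnext hlen hsub hesc using fun (n : ℕ) (u : D) =>
    exists_persistent_extension u.2 (hx u) (b n)
  let u : ℕ → D := fun n =>
    n.rec ⟨[], by rwa [initialCylinder_nil]⟩ fun n u => ⟨next n u, hnext n u⟩
  have hmono : StrictMono fun n => (u n).1.length :=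
    strictMono_nat_of_lt_succ fun n => hlen n (u n)
  have hclosure (n : ℕ) : x ∈ closure (p '' initialCylinder (u n).1) :=
    mem_closure_image_of_notMem_boundedPart (u n).2
  choose w hw using fun n => (closure_nonempty_iff.1 ⟨x, hclosure n⟩).of_image
  let z : ℕ → ℕ := fun i => w (i + 1) i
  have hz (n : ℕ) : z ∈ initialCylinder (u n).1 := by
    rw [initialCylinder_eq_cylinder (hw n)]
    refine diagonal_mem_cylinder hmono (fun n => ?_) n
    rw [← initialCylinder_eq_cylinder (hw n)]
    exact hsub n (u n) (hw (n + 1))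
  refine ⟨z, eq_of_forall_mem_closure_image_cylinder hp.continuousAt fun n => ?_, fun n => ?_⟩
  · refine closure_mono (image_mono ?_) (hclosure n)
    rw [initialCylinder_eq_cylinder (hz n)]
    exact PiNat.cylinder_anti _ hmono.le_apply
  · obtain ⟨k, hk⟩ := hesc n (u n)
    exact ⟨k, hk z (hz (n + 1))⟩

theorem exists_measurable_generic_bound_of_continuous [SecondCountableTopology X] [BorelSpace X]
    [T2Space X] (hp : Continuous p) (hφ : Continuous φ)
    (h : ∀ x, ∃ b : ℕ → ℕ → ℕ, ∀ z, p z = x → ∃ n, φ z ≤ b n) :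
    ∃ g : X → ℕ → ℕ, Measurable g ∧ ∀ᶠ x in residual X, ∀ z, p z = x → φ z ≤ᶠ[atTop] g x := by
  obtain ⟨g, hg, hb⟩ := genericallyBounded_boundedPart (p := p) (φ := φ) (S := univ)
  refine ⟨g, hg, ?_⟩
  have hgen : ∀ᶠ x in residual X, ∀ u, x ∉ finitelyBranchingPart p φ u :=
    eventually_countable_forall.2 fun u => isMeagre_finitelyBranchingPart hφ u
  filter_upwards [hb, hgen] with x hx hxB z hzx
  refine hx ?_ z (mem_univ z) hzx
  by_contra hroot
  obtain ⟨b, hb⟩ := h x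
  obtain ⟨w, hwx, hesc⟩ := exists_fiber_forall_exists_lt hp hroot hxB b
  obtain ⟨n, hn⟩ := hb w hwx
  obtain ⟨k, hk⟩ := hesc n
  exact hk.not_ge (hn k)

theorem exists_measurable_generic_bound [SecondCountableTopology X] [BorelSpace X] [T2Space X]
    {A : Set (X × (ℕ → ℕ))} (hA : AnalyticSet A)
    (h : ∀ x, ∃ b : ℕ → ℕ → ℕ, ∀ y, (x, y) ∈ A → ∃ n, y ≤ b n) :
    ∃ g : X → ℕ → ℕ, Measurable g ∧ ∀ᶠ x in residual X, ∀ y, (x, y) ∈ A → y ≤ᶠ[atTop] g x := by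
  rw [AnalyticSet] at hA
  obtain rfl | ⟨f, hf, rfl⟩ := hA
  · exact ⟨0, measurable_const, .of_forall fun _ _ => False.elim⟩
  obtain ⟨g, hg, hb⟩ := exists_measurable_generic_bound_of_continuous (continuous_fst.comp hf)
    (continuous_snd.comp hf) fun x => (h x).imp fun b hb z hz => hb _ ⟨z, Prod.ext hz rfl⟩
  refine ⟨g, hg, hb.mono fun x hx y => ?_⟩
  rintro ⟨z, hz⟩
  simpa [hz] using hx z (by simp [hz])

end Domination

theorem exists_mem_residual_continuousOn {X Y : Type*} [TopologicalSpace X] [MeasurableSpace X]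
    [BorelSpace X] [TopologicalSpace Y] [SecondCountableTopology Y] [MeasurableSpace Y]
    [OpensMeasurableSpace Y] {g : X → Y} (hg : Measurable g) :
    ∃ D ∈ residual X, ContinuousOn g D := by
  have hbasis := TopologicalSpace.isBasis_countableBasis Y
  have hcount := (TopologicalSpace.countable_countableBasis Y).to_subtype
  choose U hU hgU using fun B : TopologicalSpace.countableBasis Y =>
    (hg (hbasis.isOpen B.2).measurableSet).residualEq_isOpen
  refine ⟨{x | ∀ B : TopologicalSpace.countableBasis Y, x ∈ g ⁻¹' B ↔ x ∈ U B},
    eventually_countable_forall.2 fun B => (hgU B).mem_iff, ?_⟩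
  refine hbasis.continuousOn_iff.2 fun B hB => ⟨U ⟨B, hB⟩, hU _, ?_⟩
  ext x
  exact and_congr_left fun hx => hx ⟨B, hB⟩

section Fusion

theorem exists_ge_apply_lt_apply_lt {a b : ℕ → ℕ} (ha : StrictMono a) (hb : StrictMono b) {N : ℕ}
    (hne : ∀ i ≥ N, ∀ j, a i ≠ b j) : ∃ i ≥ N, ∃ j, a i < b j ∧ b j < a (i + 1) := by
  obtain ⟨j, hj⟩ : ∃ j, a N < b j := ⟨a N + 1, hb.le_apply⟩
  have hmem : b j ∈ Ioc (a N) (a (b j)) := ⟨hj, ha.le_apply⟩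
  rw [← ha.monotone.biUnion_Ico_Ioc_map_succ] at hmem
  simp only [mem_iUnion, mem_Ico, mem_Ioc, Order.succ_eq_add_one] at hmem
  obtain ⟨i, ⟨hi, -⟩, hij, hji⟩ := hmem
  exact ⟨i, hi, j, hij, hji.lt_of_ne (hne (i + 1) (by omega) j).symm⟩

/-- The recursion in which the value at `Nat.pair n j + 1` is computed from the values at `j` and
at `Nat.pair n j`. -/
def pairRec {α : Type*} (a : α) (next : α → α → ℕ → α) : ℕ → α
  | 0 => a
  | k + 1 => next (pairRec a next (Nat.unpair k).2) (pairRec a next k) (Nat.unpair k).1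
decreasing_by
  · exact Nat.lt_succ_of_le (Nat.unpair_right_le k)
  · exact Nat.lt_succ_self k

theorem pairRec_zero {α : Type*} (a : α) (next : α → α → ℕ → α) : pairRec a next 0 = a := by
  rw [pairRec]

theorem pairRec_pair_add_one {α : Type*} (a : α) (next : α → α → ℕ → α) (n j : ℕ) :
    pairRec a next (Nat.pair n j + 1) =
      next (pairRec a next j) (pairRec a next (Nat.pair n j)) n := by
  rw [pairRec, Nat.unpair_pair]

/-- The code of the finite sequence `PiNat.res x i`. -/
def branchNode (x : ℕ → ℕ) (i : ℕ) : ℕ :=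
  Encodable.encode (PiNat.res x i)

theorem branchNode_succ (x : ℕ → ℕ) (i : ℕ) :
    branchNode x (i + 1) = Nat.pair (x i) (branchNode x i) + 1 :=
  rfl

theorem strictMono_branchNode (x : ℕ → ℕ) : StrictMono (branchNode x) :=
  strictMono_nat_of_lt_succ fun _ => Nat.lt_succ_of_le (Nat.right_le_pair _ _)

theorem mem_cylinder_of_branchNode_eq {x y : ℕ → ℕ} {i j : ℕ}
    (h : branchNode x i = branchNode y j) : y ∈ PiNat.cylinder x i := by
  have hres : PiNat.res x i = PiNat.res y j := Encodable.encode_injective h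
  obtain rfl : i = j := by simpa using congrArg List.length hres
  rw [PiNat.cylinder_eq_res]
  exact hres.symm

theorem continuous_branchNode (i : ℕ) : Continuous fun x => branchNode x i := by
  induction i with
  | zero => exact continuous_const
  | succ i ih =>
    exact (continuous_of_discreteTopology (f := fun p : ℕ × ℕ => Nat.pair p.1 p.2 + 1)).comp
      ((continuous_apply i).prodMk ih)

/-- A node of a fusion tree: a cylinder, given by a point of it and its length, together with a
bound for everything that was decided when the node was built. -/
structure FusionNode where
  point : ℕ → ℕ
  length : ℕ
  bound : ℕ

namespace FusionNode

/-- The cylinder of a node. -/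
def cylinder (s : FusionNode) : Set (ℕ → ℕ) :=
  PiNat.cylinder s.point s.length

/-- `t` is an admissible `n`-th child of `s` built after the bound `m` was reached: it branches off
`s` at a value coding `n` and exceeding `m`, its cylinder lies in the first open sets `O i`, and
`t.bound` dominates the first coordinates of `g` on it. -/
structure IsChild (O : ℕ → Set (ℕ → ℕ)) (g : (ℕ → ℕ) → ℕ → ℕ) (s : FusionNode) (m n : ℕ)
    (t : FusionNode) : Prop where
  length_lt : s.length < t.length
  point_mem : t.point ∈ s.cylinder
  unpair_apply : (Nat.unpair (t.point s.length)).1 = n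
  lt_apply : m < t.point s.length
  cylinder_subset : ∀ i ≤ m, t.cylinder ⊆ O i
  apply_le : ∀ x ∈ t.cylinder, x ∈ ⋂ i, O i → ∀ i ≤ m, g x i ≤ t.bound
  lt_bound : m < t.bound
  length_le : t.length ≤ t.bound

end FusionNode

/-- A tree of cylinders in which the node `Nat.pair n j + 1` is the `n`-th child of the node `j`,
and is built right after the node `Nat.pair n j`. -/
structure FusionTree (O : ℕ → Set (ℕ → ℕ)) (g : (ℕ → ℕ) → ℕ → ℕ) where
  node : ℕ → FusionNode
  length_root_le : (node 0).length ≤ (node 0).bound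
  isChild : ∀ n j, (node j).IsChild O g (node (Nat.pair n j)).bound n (node (Nat.pair n j + 1))

variable {O : ℕ → Set (ℕ → ℕ)} {g : (ℕ → ℕ) → ℕ → ℕ}

theorem exists_cylinder_subset_forall_apply_le (hO : ∀ i, IsOpen (O i))
    (hg : ContinuousOn g (⋂ i, O i)) {x : ℕ → ℕ} (hx : x ∈ ⋂ i, O i) (m : ℕ) :
    ∃ k B, (∀ i ≤ m, PiNat.cylinder x k ⊆ O i) ∧
      ∀ y ∈ PiNat.cylinder x k, y ∈ ⋂ i, O i → ∀ i ≤ m, g y i ≤ B := by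
  have hOx : ⋂ i ∈ Iic m, O i ∈ 𝓝 x :=
    (biInter_mem (finite_Iic m)).2 fun i _ => (hO i).mem_nhds (mem_iInter.1 hx i)
  have hgx : g ⁻¹' PiNat.cylinder (g x) (m + 1) ∈ 𝓝[⋂ i, O i] x :=
    (hg x hx).preimage_mem_nhdsWithin (cylinder_mem_nhds (g x) (m + 1))
  obtain ⟨V, hV, hVg⟩ := mem_nhdsWithin_iff_exists_mem_nhds_inter.1 hgx
  obtain ⟨k, hk⟩ := exists_cylinder_subset_of_mem_nhds (inter_mem hOx hV)
  refine ⟨k, (Finset.range (m + 1)).sup (g x), fun i hi y hy => mem_iInter₂.1 (hk hy).1 i hi,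
    fun y hy hyO i hi => ?_⟩
  have hgy : g y i = g x i := hVg ⟨(hk hy).2, hyO⟩ i (Nat.lt_succ_of_le hi)
  exact hgy.le.trans (Finset.le_sup (f := g x) (Finset.mem_range_succ_iff.2 hi))

theorem exists_isChild (hO : ∀ i, IsOpen (O i)) (hdense : Dense (⋂ i, O i))
    (hg : ContinuousOn g (⋂ i, O i)) (s : FusionNode) (m n : ℕ) :
    ∃ t, s.IsChild O g m n t := by
  let w := Function.update s.point s.length (Nat.pair n (m + 1))
  obtain ⟨x, hxw, hx⟩ := hdense.inter_open_nonempty _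
    (PiNat.isOpen_cylinder _ w (s.length + 1)) ⟨w, PiNat.self_mem_cylinder _ _⟩
  have hval : x s.length = Nat.pair n (m + 1) := by
    simpa [w] using hxw s.length s.length.lt_succ_self
  obtain ⟨k, B, hkO, hkB⟩ := exists_cylinder_subset_forall_apply_le hO hg hx m
  let l := max k (s.length + 1)
  have hsub : PiNat.cylinder x l ⊆ PiNat.cylinder x k := PiNat.cylinder_anti x (le_max_left _ _)
  have hindex : (Nat.unpair (x s.length)).1 = n := by rw [hval, Nat.unpair_pair]
  have hlt : m < x s.length := hval ▸ Nat.right_le_pair n (m + 1)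
  exact ⟨⟨x, l, l + (m + 1) + B⟩, {
    length_lt := Nat.lt_of_succ_le (le_max_right _ _)
    point_mem := fun i hi => by simpa [w, hi.ne] using hxw i (hi.trans s.length.lt_succ_self)
    unpair_apply := hindex
    lt_apply := hlt
    cylinder_subset := fun i hi => hsub.trans (hkO i hi)
    apply_le := fun y hy hyO i hi => (hkB y (hsub hy) hyO i hi).trans (Nat.le_add_left _ _)
    lt_bound := by dsimp only; omega
    length_le := by dsimp only; omega }⟩

theorem nonempty_fusionTree (hO : ∀ i, IsOpen (O i)) (hdense : Dense (⋂ i, O i))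
    (hg : ContinuousOn g (⋂ i, O i)) : Nonempty (FusionTree O g) := by
  choose child hchild using exists_isChild hO hdense hg
  refine ⟨⟨pairRec ⟨0, 0, 0⟩ fun s t n => child s t.bound n, ?_, fun n j => ?_⟩⟩
  · rw [pairRec_zero]
  · rw [pairRec_pair_add_one]
    exact hchild _ _ _

namespace FusionTree

variable (T : FusionTree O g)

theorem exists_isChild_add_one (k : ℕ) :
    ∃ n j, (T.node j).IsChild O g (T.node k).bound n (T.node (k + 1)) :=
  ⟨(Nat.unpair k).1, (Nat.unpair k).2, by
    simpa only [Nat.pair_unpair] using T.isChild (Nat.unpair k).1 (Nat.unpair k).2⟩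

theorem strictMono_bound : StrictMono fun k => (T.node k).bound :=
  strictMono_nat_of_lt_succ fun k =>
    let ⟨_, _, h⟩ := T.exists_isChild_add_one k
    h.lt_bound

theorem length_le_bound : ∀ k, (T.node k).length ≤ (T.node k).bound
  | 0 => T.length_root_le
  | k + 1 =>
    let ⟨_, _, h⟩ := T.exists_isChild_add_one k
    h.length_le

theorem strictMono_length_branchNode (x : ℕ → ℕ) :
    StrictMono fun i => (T.node (branchNode x i)).length :=
  strictMono_nat_of_lt_succ fun i => (T.isChild (x i) (branchNode x i)).length_lt

/-- The point determined by the branch `x`. -/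
def point (x : ℕ → ℕ) : ℕ → ℕ :=
  fun i => (T.node (branchNode x (i + 1))).point i

theorem point_mem_cylinder (x : ℕ → ℕ) (i : ℕ) :
    T.point x ∈ (T.node (branchNode x i)).cylinder :=
  diagonal_mem_cylinder (w := fun i => (T.node (branchNode x i)).point)
    (T.strictMono_length_branchNode x) (fun i => (T.isChild (x i) (branchNode x i)).point_mem) i

theorem point_apply_length (x : ℕ → ℕ) (i : ℕ) :
    T.point x (T.node (branchNode x i)).length =
      (T.node (branchNode x (i + 1))).point (T.node (branchNode x i)).length :=
  T.point_mem_cylinder x (i + 1) _ (T.strictMono_length_branchNode x i.lt_succ_self)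

theorem lt_point_apply_length (x : ℕ → ℕ) (i : ℕ) :
    (T.node (Nat.pair (x i) (branchNode x i))).bound <
      T.point x (T.node (branchNode x i)).length := by
  rw [point_apply_length]
  exact (T.isChild (x i) (branchNode x i)).lt_apply

theorem continuous_point : Continuous T.point :=
  continuous_pi fun i => (continuous_of_discreteTopology (f := fun k => (T.node k).point i)).comp
    (continuous_branchNode (i + 1))

/-- The number of the child of the node `k` through which `y` passes, read off from the value of `y`
at the branching position. -/
def childIndex (k : ℕ) (y : ℕ → ℕ) : ℕ :=
  (Nat.unpair (y (T.node k).length)).1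

theorem childIndex_point (x : ℕ → ℕ) (i : ℕ) : T.childIndex (branchNode x i) (T.point x) = x i := by
  rw [childIndex, point_apply_length]
  exact (T.isChild (x i) (branchNode x i)).unpair_apply

theorem continuous_childIndex : Continuous fun q : ℕ × (ℕ → ℕ) => T.childIndex q.1 q.2 :=
  continuous_prod_of_discrete_left.2 fun k =>
    (continuous_of_discreteTopology (f := fun a => (Nat.unpair a).1)).comp
      (continuous_apply (T.node k).length)

/-- The nodes through which `y` passes, starting from the root. -/
def readNode (y : ℕ → ℕ) : ℕ → ℕ
  | 0 => 0
  | i + 1 => Nat.pair (T.childIndex (readNode y i) y) (readNode y i) + 1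

theorem readNode_point (x : ℕ → ℕ) (i : ℕ) : T.readNode (T.point x) i = branchNode x i := by
  induction i with
  | zero => rfl
  | succ i ih => rw [readNode, ih, childIndex_point, branchNode_succ]

theorem continuous_readNode (i : ℕ) : Continuous fun y => T.readNode y i := by
  induction i with
  | zero => exact continuous_const
  | succ i ih =>
    exact (continuous_of_discreteTopology (f := fun q : ℕ × ℕ => Nat.pair q.1 q.2 + 1)).comp
      ((T.continuous_childIndex.comp (ih.prodMk continuous_id)).prodMk ih)

theorem isClosedEmbedding_point : IsClosedEmbedding T.point := by
  let read (y : ℕ → ℕ) : ℕ → ℕ := fun i => T.childIndex (T.readNode y i) y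
  have hread : Continuous read := continuous_pi fun i =>
    T.continuous_childIndex.comp ((T.continuous_readNode i).prodMk continuous_id)
  have hleft : Function.LeftInverse read T.point := fun x => funext fun i => by
    simp only [read, readNode_point, childIndex_point]
  exact hleft.isClosedEmbedding hread T.continuous_point

theorem point_mem_iInter (x : ℕ → ℕ) : T.point x ∈ ⋂ i, O i := by
  refine mem_iInter.2 fun i => ?_
  have hi : i ≤ (T.node (Nat.pair (x i) (branchNode x i))).bound :=
    ((strictMono_branchNode x).le_apply.trans (Nat.right_le_pair _ _)).trans
      T.strictMono_bound.le_apply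
  exact (T.isChild (x i) (branchNode x i)).cylinder_subset i hi (T.point_mem_cylinder x (i + 1))

theorem apply_point_le (x : ℕ → ℕ) {i j : ℕ} (hi : i < branchNode x j) :
    g (T.point x) (T.node i).length ≤ (T.node (branchNode x j)).bound := by
  obtain ⟨k, hk⟩ := Nat.exists_eq_add_one_of_ne_zero (Nat.ne_zero_of_lt hi)
  have hlen : (T.node i).length ≤ (T.node k).bound :=
    (T.length_le_bound i).trans (T.strictMono_bound.monotone (by omega))
  obtain ⟨_, _, hchild⟩ := T.exists_isChild_add_one k
  rw [hk]
  exact hchild.apply_le _ (hk ▸ T.point_mem_cylinder x j) (T.point_mem_iInter x) _ hlen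

theorem not_point_eventuallyLE {x y : ℕ → ℕ} (hxy : x ≠ y) :
    ¬ T.point y ≤ᶠ[atTop] g (T.point x) := by
  intro h
  obtain ⟨N, hN⟩ := eventually_atTop.1 h
  obtain ⟨t, ht⟩ := Function.ne_iff.1 hxy
  have hne : ∀ i ≥ max N (t + 1), ∀ j, branchNode y i ≠ branchNode x j := fun i hi j hij =>
    ht (mem_cylinder_of_branchNode_eq hij t (by omega))
  obtain ⟨i, hi, j, hij, hji⟩ := exists_ge_apply_lt_apply_lt (strictMono_branchNode y)
    (strictMono_branchNode x) hne
  have hNi : N ≤ (T.node (branchNode y i)).length :=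
    ((le_max_left _ _).trans hi).trans (T.strictMono_length_branchNode y).le_apply
  refine (hN _ hNi).not_gt ?_
  calc g (T.point x) (T.node (branchNode y i)).length
      ≤ (T.node (branchNode x j)).bound := T.apply_point_le x hij
    _ ≤ (T.node (Nat.pair (y i) (branchNode y i))).bound :=
        T.strictMono_bound.monotone (Nat.lt_succ_iff.1 hji)
    _ < T.point y (T.node (branchNode y i)).length := T.lt_point_apply_length y i

end FusionTree

theorem exists_isClosedEmbedding_not_eventuallyLE {D : Set (ℕ → ℕ)} (hD : D ∈ residual (ℕ → ℕ))
    {g : (ℕ → ℕ) → ℕ → ℕ} (hg : ContinuousOn g D) :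
    ∃ f : (ℕ → ℕ) → ℕ → ℕ, IsClosedEmbedding f ∧ (∀ x, f x ∈ D) ∧
      Pairwise fun x y => ¬ f y ≤ᶠ[atTop] g (f x) := by
  obtain ⟨_, hsub, hGδ, hdense⟩ := mem_residual.1 hD
  obtain ⟨O, hO, rfl⟩ := hGδ.eq_iInter_nat
  obtain ⟨T⟩ := nonempty_fusionTree hO hdense (hg.mono hsub)
  exact ⟨T.point, T.isClosedEmbedding_point, fun x => hsub (T.point_mem_iInter x),
    fun _ _ hxy => T.not_point_eventuallyLE hxy⟩

end Fusion

theorem stmt_14_general (E : (ℕ → ℕ) → (ℕ → ℕ) → Prop)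
    (hE : AnalyticSet {p : (ℕ → ℕ) × (ℕ → ℕ) | E p.1 p.2})
    (hsections : ∀ a : ℕ → ℕ, ∃ K : ℕ → Set (ℕ → ℕ),
      (∀ n, IsCompact (K n)) ∧ {x : ℕ → ℕ | E a x} ⊆ ⋃ n, K n) :
    ∃ P : Set (ℕ → ℕ), IsClosed P ∧ Nonempty (P ≃ₜ (ℕ → ℕ)) ∧
      ∀ x ∈ P, ∀ y ∈ P, x ≠ y → ¬ E x y := by
  have hbdd (a : ℕ → ℕ) : ∃ b : ℕ → ℕ → ℕ, ∀ x, E a x → ∃ n, x ≤ b n := by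
    obtain ⟨K, hK, hcov⟩ := hsections a
    choose b hb using fun n => bddAbove_pi.2 fun k => ((hK n).image (continuous_apply k)).bddAbove
    exact ⟨b, fun x hx => (mem_iUnion.1 (hcov hx)).imp fun n hn => hb n hn⟩
  obtain ⟨g, hg, hgen⟩ := exists_measurable_generic_bound hE hbdd
  obtain ⟨D, hD, hgD⟩ := exists_mem_residual_continuousOn hg
  obtain ⟨f, hf, hfD, hfg⟩ :=
    exists_isClosedEmbedding_not_eventuallyLE (inter_mem hD hgen) (hgD.mono inter_subset_left)
  refine ⟨range f, hf.isClosed_range, ⟨hf.isEmbedding.toHomeomorph.symm⟩, ?_⟩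
  rintro _ ⟨x, rfl⟩ _ ⟨y, rfl⟩ hne hxy
  exact hfg (ne_of_apply_ne f hne) ((hfD x).2 (f y) hxy)

theorem stmt_14 (E : (ℕ → ℕ) → (ℕ → ℕ) → Prop) (hEquiv : Equivalence E)
    (hE : MeasureTheory.AnalyticSet {p : (ℕ → ℕ) × (ℕ → ℕ) | E p.1 p.2})
    (hclasses : ∀ a : ℕ → ℕ, ∃ K : ℕ → Set (ℕ → ℕ),
      (∀ n, IsCompact (K n)) ∧ {x : ℕ → ℕ | E a x} ⊆ ⋃ n, K n) :
    ∃ P : Set (ℕ → ℕ), IsClosed P ∧ Nonempty (P ≃ₜ (ℕ → ℕ)) ∧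
      ∀ x ∈ P, ∀ y ∈ P, x ≠ y → ¬ E x y :=
  stmt_14_general E hE hclasses
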